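/- arXiv:1310.7302 — 4 statements merged into one kernel-verified Lean document; each statement's English description precedes it below -/
import Mathlib

section
/- Let l ≥ 1 and let m₁, …, m_l, n be positive integers. If there exists a finitely injective surjection φ from the free product ℤ/m₁ * ℤ/m₂ * ⋯ * ℤ/m_l (of the cyclic groups of orders m₁, …, m_l) onto the cyclic group ℤ/n, then n = lcm(m₁, m₂, …, m_l). -/
/-- A group homomorphism is a *finitely injective surjection* if it is surjective and
its restriction to every finite subgroup of the domain is injective.

If there is a finitely injective surjection from the free product
`ℤ/m₁ * ℤ/m₂ * ⋯ * ℤ/m_l` of cyclic groups onto the cyclic group `ℤ/n`,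
then `n = lcm(m₁, …, m_l)`. -/
theorem stmt_0 (l : ℕ) (hl : 1 ≤ l) (m : Fin l → ℕ) (hm : ∀ i, 0 < m i)
    (n : ℕ) (hn : 0 < n)
    (φ : Monoid.CoprodI (fun i : Fin l => Multiplicative (ZMod (m i))) →*
      Multiplicative (ZMod n))
    (hsurj : Function.Surjective φ)
    (hfininj : ∀ H : Subgroup
        (Monoid.CoprodI (fun i : Fin l => Multiplicative (ZMod (m i)))),
      (H : Set (Monoid.CoprodI (fun i : Fin l => Multiplicative (ZMod (m i))))).Finite →
        Set.InjOn φ (H : Set (Monoid.CoprodI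
          (fun i : Fin l => Multiplicative (ZMod (m i)))))) :
    n = Finset.univ.lcm m := by
  have hne : ∀ i, NeZero (m i) := fun i => ⟨(hm i).ne'⟩
  have hnn : NeZero n := ⟨hn.ne'⟩
  apply Nat.dvd_antisymm
  · have key : ∀ x, (φ x) ^ (Finset.univ.lcm m) = 1 := by
      intro x
      induction x using Monoid.CoprodI.induction_on with
      | one => simp
      | of i y =>
        obtain ⟨k, hk⟩ := Finset.dvd_lcm (f := m) (Finset.mem_univ i)
        have hy : y ^ m i = 1 := by
          have h := pow_card_eq_one' (x := y)
          rwa [Nat.card_congr Multiplicative.toAdd, Nat.card_zmod] at h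
        have hz := MonoidHom.map_pow (φ.comp (Monoid.CoprodI.of
          (M := fun i : Fin l => Multiplicative (ZMod (m i))) (i := i))) y (m i)
        rw [hy, map_one, MonoidHom.comp_apply] at hz
        rw [hk, pow_mul, ← hz, one_pow]
      | mul x y hx hy => rw [map_mul, mul_pow, hx, hy, one_mul]
    obtain ⟨x, hx⟩ := hsurj (Multiplicative.ofAdd (1 : ZMod n))
    have h := orderOf_dvd_of_pow_eq_one (key x)
    rwa [hx, orderOf_ofAdd_eq_addOrderOf, ZMod.addOrderOf_one] at h
  · apply Finset.lcm_dvd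
    intro i _
    have hinj : Function.Injective
        (φ.comp (Monoid.CoprodI.of (M := fun i : Fin l => Multiplicative (ZMod (m i)))
          (i := i))) := by
      intro a b hab
      apply Monoid.CoprodI.of_injective (M := fun i : Fin l => Multiplicative (ZMod (m i))) i
      have hfin : Finite (Multiplicative (ZMod (m i))) := inferInstance
      refine hfininj (Monoid.CoprodI.of (M := fun i : Fin l => Multiplicative (ZMod (m i)))
          (i := i)).range ?_ ⟨a, rfl⟩ ⟨b, rfl⟩ hab
      rw [MonoidHom.coe_range]
      exact Set.finite_range _
    have h := Subgroup.card_dvd_of_injective _ hinj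
    rwa [Nat.card_congr Multiplicative.toAdd, Nat.card_zmod,
      Nat.card_congr Multiplicative.toAdd, Nat.card_zmod] at h
end

section
/- Let G be a group acting on a set M, let h ∈ G be an element of finite order, and let x ∈ M. Suppose that h · x lies in the orbit of x under the subgroup ⟨h²⟩ generated by h² (i.e., the coset of x in M/⟨h²⟩ is fixed by the induced action of h). Then the orbit of x under ⟨h²⟩ is finite and its cardinality is odd; equivalently, the index in ⟨h²⟩ of the stabilizer of x intersected with ⟨h²⟩ is odd. -/
/-- Let a group `G` act on a set `M`, let `h ∈ G` have finite order and let `x ∈ M`.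
If `h • x` lies in the orbit of `x` under the subgroup `⟨h²⟩` generated by `h²`
(i.e. the class of `x` in `M/⟨h²⟩` is fixed by `h`), then the `⟨h²⟩`-orbit of `x`
is finite and has odd cardinality. -/
theorem stmt_4 {G : Type*} [Group G] {M : Type*} [MulAction G M]
    (h : G) (hfin : IsOfFinOrder h) (x : M)
    (hx : h • x ∈ MulAction.orbit (Subgroup.zpowers (h ^ 2)) x) :
    (MulAction.orbit (Subgroup.zpowers (h ^ 2)) x).Finite ∧
      Odd (MulAction.orbit (Subgroup.zpowers (h ^ 2)) x).ncard := by
  have hfinite : (MulAction.orbit (Subgroup.zpowers (h ^ 2)) x).Finite := by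
    have h2 : IsOfFinOrder (h ^ 2) := hfin.pow
    have : Finite (Subgroup.zpowers (h ^ 2)) := h2.finite_zpowers.to_subtype
    exact Set.finite_range _
  refine ⟨hfinite, ?_⟩
  have hcard : (MulAction.orbit (Subgroup.zpowers (h ^ 2)) x).ncard
      = MulAction.period (h ^ 2) x := by
    have := hfinite.fintype
    rw [MulAction.period, MulAction.minimalPeriod_eq_card, Set.ncard_eq_toFinset_card',
      Set.toFinset_card]
  rw [hcard]
  obtain ⟨⟨g, k, rfl⟩, hk⟩ := hx
  replace hk : ((h ^ 2) ^ k) • x = h • x := hk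
  have h1 : h ^ (2 * k - 1) • x = x := by
    have e : h ^ (2 * k - 1) = h⁻¹ * (h ^ 2) ^ k := by group
    rw [e, mul_smul, hk, inv_smul_smul]
  have h3 : (h ^ 2) ^ (2 * k - 1) • x = x := by
    have e : (h ^ 2) ^ (2 * k - 1) = h ^ (2 * k - 1) * h ^ (2 * k - 1) := by
      rw [← zpow_add, ← zpow_natCast, ← zpow_mul]; congr 1; push_cast; ring
    rw [e, mul_smul, h1, h1]
  rw [MulAction.zpow_smul_eq_iff_period_dvd] at h3
  have ho : Odd (2 * k - 1) := ⟨k - 1, by ring⟩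
  obtain ⟨c, hc⟩ := h3
  rw [hc, Int.odd_mul] at ho
  exact_mod_cast ho.1
end

section
/- Let g be a positive integer and let A, B, C, D, X be g × g matrices with integer entries. Suppose X is non-degenerate (det X ≠ 0) and that AᵀXB = −Xᵀ, CᵀXD = Xᵀ, AD = CB, and BC = DA, where Mᵀ denotes the transpose of M. Then g is even. -/
open Matrix

/-- If `A, B, C, D, X` are `g × g` integer matrices with `det X ≠ 0` satisfying
`AᵀXB = −Xᵀ`, `CᵀXD = Xᵀ`, `AD = CB` and `BC = DA`, then `g` is even. -/
theorem stmt_5 (g : ℕ) (hg : 0 < g) (A B C D X : Matrix (Fin g) (Fin g) ℤ)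
    (hX : X.det ≠ 0)
    (h1 : Aᵀ * X * B = -Xᵀ)
    (h2 : Cᵀ * X * D = Xᵀ)
    (h3 : A * D = C * B)
    (h4 : B * C = D * A) :
    Even g := by
  by_contra hodd
  rw [Nat.not_even_iff_odd] at hodd
  have e1 := congrArg Matrix.det h1
  have e2 := congrArg Matrix.det h2
  have e3 := congrArg Matrix.det h3
  simp only [Matrix.det_mul, Matrix.det_transpose, Matrix.det_neg, Fintype.card_fin,
    hodd.neg_one_pow] at e1 e2 e3
  have f1 : A.det * B.det = -1 := mul_right_cancel₀ hX (by linear_combination e1)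
  have f2 : C.det * D.det = 1 := mul_right_cancel₀ hX (by linear_combination e2)
  have f3 : (C.det * B.det) ^ 2 = -1 := by
    linear_combination (-(C.det * B.det)) * e3 + C.det * D.det * f1 - f2
  nlinarith [sq_nonneg (C.det * B.det)]
end

section
/- Let g ≥ 2 be an even integer. Let g′, k, N be integers with g′ ≥ 0, k ≥ 0, k even, and N ≥ g/2 + 1, satisfying the Riemann–Hurwitz relation 2 − 2g = N(2 − 2g′) − k(N − 1). Then (g′, k, N) is one of the four triples (2, 0, g−1), (1, 2, g), (0, 4, g+1), (0, 6, g/2 + 1). -/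
/-- For even `g ≥ 2`, the only integer solutions `(g', k, N)` with `g' ≥ 0`, `k ≥ 0`,
`k` even, `N ≥ g/2 + 1` of the Riemann–Hurwitz relation
`2 − 2g = N(2 − 2g') − k(N − 1)` are
`(2, 0, g−1)`, `(1, 2, g)`, `(0, 4, g+1)` and `(0, 6, g/2 + 1)`. -/
theorem stmt_6 (g : ℤ) (hg : 2 ≤ g) (hge : Even g)
    (g' k N : ℤ) (hg' : 0 ≤ g') (hk : 0 ≤ k) (hke : Even k)
    (hN : g / 2 + 1 ≤ N)
    (hRH : 2 - 2 * g = N * (2 - 2 * g') - k * (N - 1)) :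
    (g', k, N) = (2, 0, g - 1) ∨ (g', k, N) = (1, 2, g) ∨
      (g', k, N) = (0, 4, g + 1) ∨ (g', k, N) = (0, 6, g / 2 + 1) := by
  obtain ⟨m, rfl⟩ := hge
  obtain ⟨j, rfl⟩ := hke
  obtain ⟨M, rfl⟩ : ∃ M, N = M + 1 := ⟨N - 1, by ring⟩
  have hd : (m + m) / 2 = m := by omega
  rw [hd] at hN ⊢
  have hM : m ≤ M := by omega
  have hm : 1 ≤ m := by omega
  have hj : 0 ≤ j := by omega
  have key : 2 * m = M * (g' - 1 + j) + g' := by linarith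
  simp only [Prod.mk.injEq]
  have hs : g' - 1 + j ≤ 2 := by
    by_contra h
    have : M * 3 ≤ M * (g' - 1 + j) := mul_le_mul_of_nonneg_left (by omega) (by omega)
    omega
  have h1 : g' ≤ 3 := by omega
  have h2 : j ≤ 3 := by omega
  clear hRH
  interval_cases g' <;> interval_cases j <;> omega
end
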